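/- Let X be a proper, connected, geodesically complete CAT(0) space. For all x, y ∈ X and all ξ, η ∈ ∂X, one has (ξ|η)_x = ½(B(y,x,ξ) + B(y,x,η)) + (ξ|η)_y (with the convention that both sides are infinite exactly when one Gromov product is infinite). -/

import Mathlib

/-!
The Gromov product has an intrinsic description in terms of Busemann functions: for every `x`,
`(ξ|η)_x = sup_z -½ (B(x,z,ξ) + B(x,z,η))`.
The inequality `≥` is the triangle inequality `d(ξ_x(t), η_x(t)) ≤ d(z, ξ_x(t)) + d(z, η_x(t))` in
the limit (`neg_half_busemann_le_gromov`); for `≤` one takes for `z` the midpoint of `ξ_x(t)` and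
`η_x(t)` and uses that `B(x,z,ξ)` is an infimum (`exists_le_neg_half_busemann`). The change of base
point is then the cocycle equation `B(x,z,ξ) = B(y,z,ξ) - B(y,x,ξ)` (`busemann_cocycle`).

The cocycle equation compares the Busemann functions `b`, `b'` of two asymptotic rays `γ`, `γ'`.
The quadrilateral inequality of CAT(0) geometry (`quadrilateral`) gives
`d(z,γT)² + d(w,γ'T)² ≤ d(z,γ'T)² + d(w,γT)² + K` with `K` independent of `T`. As
`d(z,γT) = T + b(z) + o(1)`, dividing by `2T` and letting `T → ∞` yields
`b(z) + b'(w) ≤ b'(z) + b(w)`; exchanging `z` and `w` shows that `b - b'` is constant.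

Finally, a ray from each `x` in each class `ξ` has to exist (`exists_asymptotic_ray`). For a ray `γ`
it is a limit along an ultrafilter of the geodesics from `x` to `γ(n)`, which exists by properness;
the CAT(0) inequality at an arbitrary point of a segment (`stewart`) keeps these geodesics at
bounded distance from `γ`.
-/

noncomputable section

open Filter Topology Set Classical
open scoped ENNReal NNReal

namespace Paper

variable {X : Type*} [MetricSpace X]

/-- A geodesic ray: a unit-speed isometric embedding of `[0, ∞)` (only the values for
nonnegative times matter). -/
def IsGeodesicRay (γ : ℝ → X) : Prop :=
  ∀ s t : ℝ, 0 ≤ s → 0 ≤ t → dist (γ s) (γ t) = |s - t|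

/-- A bi-infinite geodesic: a unit-speed isometric embedding of `ℝ`. -/
def IsGeodesicLine (γ : ℝ → X) : Prop :=
  ∀ s t : ℝ, dist (γ s) (γ t) = |s - t|

theorem IsGeodesicLine.ray {γ : ℝ → X} (h : IsGeodesicLine γ) : IsGeodesicRay γ :=
  fun s t _ _ => h s t

theorem IsGeodesicLine.rayNeg {γ : ℝ → X} (h : IsGeodesicLine γ) :
    IsGeodesicRay fun t => γ (-t) := by
  intro s t _ _
  show dist (γ (-s)) (γ (-t)) = |s - t|
  rw [h (-s) (-t), neg_sub_neg, abs_sub_comm]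

/-- A geodesic metric space: any two points are joined by a geodesic segment. -/
def GeodesicSpace (X : Type*) [MetricSpace X] : Prop :=
  ∀ x y : X, ∃ γ : ℝ → X, γ 0 = x ∧ γ (dist x y) = y ∧
    ∀ s ∈ Set.Icc (0 : ℝ) (dist x y), ∀ t ∈ Set.Icc (0 : ℝ) (dist x y),
      dist (γ s) (γ t) = |s - t|

/-- CAT(0) space: a geodesic space satisfying the CN (Bruhat–Tits) inequality. -/
def CAT0Space (X : Type*) [MetricSpace X] : Prop :=
  GeodesicSpace X ∧
    ∀ x y z m : X, dist y m = dist y z / 2 → dist m z = dist y z / 2 →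
      dist x m ^ 2 ≤ dist x y ^ 2 / 2 + dist x z ^ 2 / 2 - dist y z ^ 2 / 4

/-- Geodesic completeness: every geodesic segment extends to a bi-infinite geodesic line. -/
def GeodesicallyComplete (X : Type*) [MetricSpace X] : Prop :=
  ∀ (γ : ℝ → X) (a b : ℝ), a < b →
    (∀ s ∈ Set.Icc a b, ∀ t ∈ Set.Icc a b, dist (γ s) (γ t) = |s - t|) →
    ∃ δ : ℝ → X, IsGeodesicLine δ ∧ ∀ t ∈ Set.Icc a b, δ t = γ t

/-- The space of geodesic rays in `X`. -/
def RaySpace (X : Type*) [MetricSpace X] : Type _ := {γ : ℝ → X // IsGeodesicRay γ}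

/-- Rays are asymptotic if they stay at bounded distance from each other. -/
instance raySetoid (X : Type*) [MetricSpace X] : Setoid (RaySpace X) where
  r γ γ' := ∃ C : ℝ, ∀ t : ℝ, 0 ≤ t → dist (γ.1 t) (γ'.1 t) ≤ C
  iseqv := by
    constructor
    · intro γ; exact ⟨0, fun t _ => by simp⟩
    · rintro γ γ' ⟨C, hC⟩
      exact ⟨C, fun t ht => by rw [dist_comm]; exact hC t ht⟩
    · rintro γ γ' γ'' ⟨C, hC⟩ ⟨D, hD⟩
      exact ⟨C + D, fun t ht => (dist_triangle (γ.1 t) (γ'.1 t) (γ''.1 t)).trans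
        (add_le_add (hC t ht) (hD t ht))⟩

/-- The boundary at infinity: asymptoticity classes of geodesic rays. -/
def Boundary (X : Type*) [MetricSpace X] : Type _ := Quotient (raySetoid X)

/-- The point at infinity represented by a geodesic ray. -/
def boundaryPoint {γ : ℝ → X} (h : IsGeodesicRay γ) : Boundary X :=
  Quotient.mk (raySetoid X) ⟨γ, h⟩

/-- The geodesic ray issuing from `x` representing `ξ` (chosen; in a proper geodesically
complete CAT(0) space it exists and is unique). -/
def rayFrom (x : X) (ξ : Boundary X) : ℝ → X :=
  if h : ∃ γ : ℝ → X, γ 0 = x ∧ ∃ hγ : IsGeodesicRay γ, boundaryPoint hγ = ξ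
  then h.choose else fun _ => x

/-- The Gromov product `(ξ|η)_x ∈ [0,∞]`, defined as the (monotone) limit
`lim_{t→∞} (t - d(ξ_x(t), η_x(t))/2)`, i.e. the supremum over nonnegative times. -/
def gromov (x : X) (ξ η : Boundary X) : EReal :=
  ⨆ (t : ℝ) (_ : 0 ≤ t),
    ((t - dist (rayFrom x ξ t) (rayFrom x η t) / 2 : ℝ) : EReal)

/-- `ρ_x(ξ,η) = e^{-(ξ|η)_x}`, with `e^{-∞} = 0`. -/
def rho (x : X) (ξ η : Boundary X) : ℝ :=
  if gromov x ξ η = ⊤ then 0 else Real.exp (-(gromov x ξ η).toReal)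

/-- A pair of boundary points is algebraically visible w.r.t. the base point `x` if their
Gromov product is finite. -/
def AVisible (x : X) (ξ η : Boundary X) : Prop := gromov x ξ η ≠ ⊤

/-- Algebraic visibility (with respect to every base point; this is base-point independent). -/
def AVis {X : Type*} [MetricSpace X] (ξ η : Boundary X) : Prop :=
  ∀ x : X, gromov x ξ η ≠ ⊤

/-- The cross ratio with base point `x`, valued in `[0,∞]`. -/
def crX (x : X) (ξ₁ ξ₂ ξ₃ ξ₄ : Boundary X) : ℝ≥0∞ :=
  (ENNReal.ofReal (rho x ξ₁ ξ₂) * ENNReal.ofReal (rho x ξ₃ ξ₄)) /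
    (ENNReal.ofReal (rho x ξ₁ ξ₃) * ENNReal.ofReal (rho x ξ₂ ξ₄))

/-- A quadruple is admissible if among any three of its members, at least two of the three
pairs are algebraically visible. -/
def AdmissibleQuad (x : X) (q : Fin 4 → Boundary X) : Prop :=
  ∀ i j k : Fin 4, i ≠ j → j ≠ k → i ≠ k →
    ((AVisible x (q i) (q j) ∧ AVisible x (q i) (q k)) ∨
     (AVisible x (q i) (q j) ∧ AVisible x (q j) (q k)) ∨
     (AVisible x (q i) (q k) ∧ AVisible x (q j) (q k)))

/-- The Busemann function `B(x,y,ξ) = lim_{t→∞} (d(y,ξ_x(t)) - d(x,ξ_x(t)))`;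
the function is non-increasing and bounded, so the limit is the infimum. -/
def busemann (x y : X) (ξ : Boundary X) : ℝ :=
  ⨅ t : {t : ℝ // 0 ≤ t}, (dist y (rayFrom x ξ t.1) - dist x (rayFrom x ξ t.1))

/-- The visual topology on the boundary at infinity, generated by the sets
`U_{R,ε,x}(ξ) = {η | d(η_x(R), ξ_x(R)) < ε}`. -/
def visualTopology (X : Type*) [MetricSpace X] : TopologicalSpace (Boundary X) :=
  TopologicalSpace.generateFrom
    { U | ∃ (x : X) (ξ : Boundary X) (R ε : ℝ), 0 < ε ∧
        U = { η : Boundary X | dist (rayFrom x η R) (rayFrom x ξ R) < ε } }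

/-- A pair of boundary points is visible if some bi-infinite geodesic has them as its two
endpoints at infinity. -/
def VisiblePair (ξ η : Boundary X) : Prop :=
  ∃ (γ : ℝ → X) (h : IsGeodesicLine γ),
    boundaryPoint h.rayNeg = ξ ∧ boundaryPoint h.ray = η

/-- A geodesic bounds a flat half-plane if there is an isometric embedding of the Euclidean
half-plane whose boundary line is the given geodesic. -/
def BoundsFlatHalfPlane (γ : ℝ → X) : Prop :=
  ∃ φ : ℝ × ℝ → X,
    (∀ p q : ℝ × ℝ, 0 ≤ p.2 → 0 ≤ q.2 →
      dist (φ p) (φ q) = Real.sqrt ((p.1 - q.1) ^ 2 + (p.2 - q.2) ^ 2)) ∧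
    ∀ t : ℝ, φ (t, 0) = γ t

/-- Two boundary points are connected by a rank 1 geodesic. -/
def RankOneConnected (ξ η : Boundary X) : Prop :=
  ∃ (γ : ℝ → X) (h : IsGeodesicLine γ), ¬ BoundsFlatHalfPlane γ ∧
    boundaryPoint h.rayNeg = ξ ∧ boundaryPoint h.ray = η

/-- `ξ` is in a rank 1 hinge. -/
def RankOneHinge (ξ : Boundary X) : Prop :=
  ∃ η ζ : Boundary X, AVis η ζ ∧ RankOneConnected ξ η ∧ RankOneConnected ξ ζ

/-- The boundary of `X` satisfies the 4-visibility condition (4v). -/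
def FourVisBoundary (X : Type*) [MetricSpace X] : Prop :=
  ∀ ξ₁ ξ₂ ξ₃ ξ₄ : Boundary X, ∃ η : Boundary X,
    AVis ξ₁ η ∧ AVis ξ₂ η ∧ AVis ξ₃ η ∧ AVis ξ₄ η

/-- `ρ_x` as an `ℝ≥0∞`-valued kernel. -/
def rhoE (x : X) (ξ η : Boundary X) : ℝ≥0∞ := ENNReal.ofReal (rho x ξ η)

end Paper

namespace Paper

/-! ### Consequences of the CN inequality -/

/-- The CAT(0) comparison inequality at an arbitrary point of a segment, multiplied by the length
`L`. The difference `g` of the two sides is continuous, midpoint convex and vanishes at the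
endpoints; at a maximum point `s`, midpoint convexity between the endpoint nearest to `s` and its
reflection in `s` forces `g s ≤ 0`. -/
theorem stewart {X : Type*} [MetricSpace X] (hcat : CAT0Space X) (p : X) (γ : ℝ → X) (L : ℝ)
    (hγ : ∀ s ∈ Set.Icc (0 : ℝ) L, ∀ t ∈ Set.Icc (0 : ℝ) L, dist (γ s) (γ t) = |s - t|)
    (t : ℝ) (ht : t ∈ Set.Icc (0 : ℝ) L) :
    L * dist p (γ t) ^ 2 ≤
      (L - t) * dist p (γ 0) ^ 2 + t * dist p (γ L) ^ 2 - L * t * (L - t) := by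
  have hL : 0 ≤ L := ht.1.trans ht.2
  set g : ℝ → ℝ := fun t => L * dist p (γ t) ^ 2 - (L - t) * dist p (γ 0) ^ 2
    - t * dist p (γ L) ^ 2 + L * t * (L - t) with hg
  have hγc : ContinuousOn γ (Set.Icc 0 L) := by
    have : LipschitzOnWith 1 γ (Set.Icc 0 L) := by
      apply LipschitzOnWith.of_dist_le_mul
      intro s hs t ht
      rw [hγ s hs t ht, Real.dist_eq]; simp
    exact this.continuousOn
  have hgc : ContinuousOn g (Set.Icc 0 L) := by
    have h1 : ContinuousOn (fun t => dist p (γ t)) (Set.Icc 0 L) :=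
      (continuous_dist.comp_continuousOn (continuousOn_const.prodMk hγc) :)
    fun_prop
  have hmid : ∀ u ∈ Set.Icc (0 : ℝ) L, ∀ v ∈ Set.Icc (0 : ℝ) L, u ≤ v →
      g ((u + v) / 2) ≤ (g u + g v) / 2 := by
    intro u hu v hv huv
    have hm : (u + v) / 2 ∈ Set.Icc (0 : ℝ) L :=
      ⟨by linarith [hu.1, hv.1], by linarith [hu.2, hv.2]⟩
    have e1 : dist (γ u) (γ v) = v - u := by
      rw [hγ u hu v hv, abs_of_nonpos (by linarith)]; ring
    have e2 : dist (γ u) (γ ((u + v) / 2)) = dist (γ u) (γ v) / 2 := by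
      rw [e1, hγ u hu _ hm, abs_of_nonpos (by linarith)]; ring
    have e3 : dist (γ ((u + v) / 2)) (γ v) = dist (γ u) (γ v) / 2 := by
      rw [e1, hγ _ hm v hv, abs_of_nonpos (by linarith)]; ring
    have h := hcat.2 p _ _ _ e2 e3
    rw [e1] at h
    have h' := mul_le_mul_of_nonneg_left h hL
    simp only [hg]
    linarith
  obtain ⟨s, hs, hmax⟩ := isCompact_Icc.exists_isMaxOn ⟨t, ht⟩ hgc
  have hmax' : ∀ u ∈ Set.Icc (0 : ℝ) L, g u ≤ g s := hmax
  have g0 : g 0 = 0 := by simp [hg]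
  have gL : g L = 0 := by simp [hg]
  have hgs : g s ≤ 0 := by
    rcases le_total s (L / 2) with h | h
    · have hv : 2 * s ∈ Set.Icc (0 : ℝ) L := ⟨by linarith [hs.1], by linarith⟩
      have h1 := hmid 0 ⟨le_rfl, hL⟩ (2 * s) hv hv.1
      rw [show (0 + 2 * s) / 2 = s by ring, g0] at h1
      linarith [hmax' _ hv]
    · have hv : 2 * s - L ∈ Set.Icc (0 : ℝ) L := ⟨by linarith, by linarith [hs.2]⟩
      have h1 := hmid (2 * s - L) hv L ⟨hL, le_rfl⟩ hv.2
      rw [show (2 * s - L + L) / 2 = s by ring, gL] at h1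
      linarith [hmax' _ hv]
  have := (hmax' t ht).trans hgs
  simp only [hg] at this
  linarith

theorem exists_midpoint {X : Type*} [MetricSpace X] (hX : GeodesicSpace X) (p q : X) :
    ∃ m, dist p m = dist p q / 2 ∧ dist m q = dist p q / 2 := by
  obtain ⟨γ, h0, h1, h⟩ := hX p q
  have hd : 0 ≤ dist p q := dist_nonneg
  have a0 : (0 : ℝ) ∈ Set.Icc 0 (dist p q) := ⟨le_rfl, hd⟩
  have a1 : dist p q ∈ Set.Icc 0 (dist p q) := ⟨hd, le_rfl⟩
  have am : dist p q / 2 ∈ Set.Icc 0 (dist p q) := ⟨by linarith, by linarith⟩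
  refine ⟨γ (dist p q / 2), ?_, ?_⟩
  · have := h _ a0 _ am
    rw [h0, abs_of_nonpos (by linarith)] at this
    linarith
  · have := h _ am _ a1
    rw [h1, abs_of_nonpos (by linarith)] at this
    linarith

/-- In a CAT(0) space the squares of the diagonals of a quadrilateral sum to at most the sum of
the squares of its sides: apply the CN inequality twice at the midpoint of the diagonal `pr`. -/
theorem quadrilateral {X : Type*} [MetricSpace X] (hcat : CAT0Space X) (p q r s : X) :
    dist p r ^ 2 + dist q s ^ 2 ≤
      dist q p ^ 2 + dist q r ^ 2 + dist s p ^ 2 + dist s r ^ 2 := by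
  obtain ⟨m, h1, h2⟩ := exists_midpoint hcat.1 p r
  have hq := hcat.2 q p r m h1 h2
  have hs := hcat.2 s p r m h1 h2
  have ht : dist q s ≤ dist q m + dist s m := dist_triangle_right q s m
  have : dist q s ^ 2 ≤ (dist q m + dist s m) ^ 2 := by gcongr
  nlinarith [sq_nonneg (dist q m - dist s m)]

/-! ### Existence of rays from a given point -/

/-- The geodesic `σ` from `x` to `γ n` stays at bounded distance from the ray `γ`, uniformly in
`n`. -/
theorem dist_geodesic_ray_le {X : Type*} [MetricSpace X] (hcat : CAT0Space X) (x : X)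
    {γ : ℝ → X} (hγ : IsGeodesicRay γ) (n : ℝ) (σ : ℝ → X) (hσ0 : σ 0 = x)
    (hσ1 : σ (dist x (γ n)) = γ n)
    (hσ : ∀ s ∈ Set.Icc (0 : ℝ) (dist x (γ n)), ∀ t ∈ Set.Icc (0 : ℝ) (dist x (γ n)),
      dist (σ s) (σ t) = |s - t|)
    (t : ℝ) (ht : 0 ≤ t) (htn : t ≤ n) (htL : t ≤ dist x (γ n)) (hn : 0 < n)
    (hL : 0 < dist x (γ n)) :
    dist (σ t) (γ t) ≤ 2 * dist x (γ 0) := by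
  set L := dist x (γ n) with hLdef
  set D := dist x (γ 0) with hD
  have hDn : 0 ≤ D := dist_nonneg
  have hyn : dist (γ 0) (γ n) = n := by
    rw [hγ 0 n le_rfl hn.le, abs_of_nonpos (by linarith)]; ring
  have hδ1 : L - n ≤ D := by
    have := dist_triangle x (γ 0) (γ n)
    linarith
  have hδ2 : -D ≤ L - n := by
    have := dist_triangle (γ 0) x (γ n)
    rw [dist_comm (γ 0) x] at this
    linarith
  have hδ : (L - n) ^ 2 ≤ D ^ 2 := by nlinarith
  have s1 := stewart hcat (γ t) σ L hσ t ⟨ht, htL⟩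
  have s2 := stewart hcat x γ n (fun s hs t ht => hγ s t hs.1 ht.1) t ⟨ht, htn⟩
  rw [hσ0, hσ1, dist_comm (γ t) x] at s1
  have e : dist (γ t) (γ n) = n - t := by
    rw [hγ t n ht hn.le, abs_of_nonpos (by linarith)]; ring
  rw [e] at s1
  rw [← hLdef, ← hD] at s2
  rw [dist_comm (γ t) (σ t)] at s1
  set a := dist (σ t) (γ t) with ha
  set c := dist x (γ t) with hc
  have ha0 : 0 ≤ a := dist_nonneg
  -- The terms linear in `t` are kept exactly: they cancel in the second application of `stewart`.
  have c2 : c ^ 2 ≤ t ^ 2 + 2 * t * (L - n) + 2 * D ^ 2 := by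
    have h1 : n * c ^ 2 ≤ n * (t ^ 2 + 2 * t * (L - n) + 2 * D ^ 2) := by
      have i1 : t * (L - n) ^ 2 ≤ n * D ^ 2 := mul_le_mul htn hδ (sq_nonneg _) hn.le
      have i2 : (n - t) * D ^ 2 ≤ n * D ^ 2 :=
        mul_le_mul_of_nonneg_right (by linarith) (sq_nonneg _)
      nlinarith
    exact le_of_mul_le_mul_left h1 hn
  have a2 : a ^ 2 ≤ 4 * D ^ 2 := by
    have h1 : L * a ^ 2 ≤ L * (4 * D ^ 2) := by
      have i1 := mul_le_mul_of_nonneg_left c2 (sub_nonneg.2 htL)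
      have i2 : t * (L - n) ^ 2 ≤ L * D ^ 2 := mul_le_mul htL hδ (sq_nonneg _) hL.le
      have i3 : (L - t) * D ^ 2 ≤ L * D ^ 2 :=
        mul_le_mul_of_nonneg_right (by linarith) (sq_nonneg _)
      nlinarith
    exact le_of_mul_le_mul_left h1 hL
  exact abs_le_of_sq_le_sq' (by nlinarith) (by linarith) |>.2

theorem exists_asymptotic_ray {X : Type*} [MetricSpace X] [ProperSpace X] (hcat : CAT0Space X)
    (x : X) {γ : ℝ → X} (hγ : IsGeodesicRay γ) :
    ∃ σ : ℝ → X, σ 0 = x ∧ IsGeodesicRay σ ∧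
      ∃ C : ℝ, ∀ t : ℝ, 0 ≤ t → dist (σ t) (γ t) ≤ C := by
  choose c hc0 hc1 hc using fun n : ℕ => hcat.1 x (γ n)
  let F : Ultrafilter ℕ := hyperfilter ℕ
  have hF : (F : Filter ℕ) ≤ atTop := Nat.hyperfilter_le_atTop
  have hlen : ∀ t : ℝ, ∀ᶠ n : ℕ in (F : Filter ℕ),
      t ≤ (n : ℝ) ∧ t ≤ dist x (γ n) ∧ 0 < (n : ℝ) ∧ 0 < dist x (γ n) := by
    intro t
    apply hF
    filter_upwards [(tendsto_natCast_atTop_atTop (R := ℝ)).eventually_ge_atTop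
      (|t| + 1 + dist x (γ 0))] with n hn
    have h0 : 0 ≤ dist x (γ 0) := dist_nonneg
    have h1 := dist_triangle (γ 0) x (γ n)
    have hn0 : (0 : ℝ) ≤ n := Nat.cast_nonneg n
    rw [hγ 0 n le_rfl hn0, abs_of_nonpos (by linarith), dist_comm (γ 0) x] at h1
    have h2 := le_abs_self t
    have h3 := abs_nonneg t
    exact ⟨by linarith, by linarith, by linarith, by linarith⟩
  have hlim : ∀ t : ℝ, ∃ p : X, 0 ≤ t →
      p ∈ Metric.closedBall x t ∧ Tendsto (fun n => c n t) F (𝓝 p) := by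
    intro t
    by_cases ht : 0 ≤ t
    · have hmem : ∀ᶠ n in (F : Filter ℕ), c n t ∈ Metric.closedBall x t := by
        filter_upwards [hlen t] with n hn
        have := hc n t ⟨ht, hn.2.1⟩ 0 ⟨le_rfl, dist_nonneg⟩
        rw [hc0, sub_zero, abs_of_nonneg ht] at this
        exact this.le
      obtain ⟨p, hp, hle⟩ := (isCompact_closedBall x t).ultrafilter_le_nhds
        (F.map fun n => c n t) (le_principal_iff.2 hmem)
      exact ⟨p, fun _ => ⟨hp, hle⟩⟩
    · exact ⟨x, fun h => absurd h ht⟩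
  choose σ hσ using hlim
  refine ⟨σ, ?_, ?_, 2 * dist x (γ 0), ?_⟩
  · have := (hσ 0 le_rfl).1
    simpa using this
  · intro s t hs ht
    refine tendsto_nhds_unique ((hσ s hs).2.dist (hσ t ht).2) ?_
    refine tendsto_const_nhds.congr' ?_
    filter_upwards [hlen s, hlen t] with n h1 h2
    exact (hc n s ⟨hs, h1.2.1⟩ t ⟨ht, h2.2.1⟩).symm
  · intro t ht
    refine le_of_tendsto ((hσ t ht).2.dist tendsto_const_nhds) ?_
    filter_upwards [hlen t] with n hn
    exact dist_geodesic_ray_le hcat x hγ n (c n) (hc0 n) (hc1 n) (hc n) t ht hn.1 hn.2.1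
      hn.2.2.1 hn.2.2.2

theorem rayFrom_spec {X : Type*} [MetricSpace X] [ProperSpace X] (hcat : CAT0Space X)
    (x : X) (ξ : Boundary X) :
    rayFrom x ξ 0 = x ∧ ∃ h : IsGeodesicRay (rayFrom x ξ), boundaryPoint h = ξ := by
  have hex : ∃ γ : ℝ → X, γ 0 = x ∧ ∃ hγ : IsGeodesicRay γ, boundaryPoint hγ = ξ := by
    induction ξ using Quotient.inductionOn with
    | h γ =>
      obtain ⟨σ, h0, hσ, hC⟩ := exists_asymptotic_ray hcat x γ.2
      exact ⟨σ, h0, hσ, Quotient.sound hC⟩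
  have e : rayFrom x ξ = hex.choose := dif_pos hex
  rw [e]
  exact hex.choose_spec

theorem dist_rayFrom {X : Type*} [MetricSpace X] [ProperSpace X] (hcat : CAT0Space X)
    (x : X) (ξ : Boundary X) {t : ℝ} (ht : 0 ≤ t) : dist x (rayFrom x ξ t) = t := by
  obtain ⟨h0, h, -⟩ := rayFrom_spec hcat x ξ
  have := h 0 t le_rfl ht
  rw [h0, zero_sub, abs_neg, abs_of_nonneg ht] at this
  exact this

theorem rayFrom_asymptotic {X : Type*} [MetricSpace X] [ProperSpace X] (hcat : CAT0Space X)
    (x y : X) (ξ : Boundary X) :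
    ∃ C : ℝ, ∀ t : ℝ, 0 ≤ t → dist (rayFrom x ξ t) (rayFrom y ξ t) ≤ C := by
  obtain ⟨-, hx, ex⟩ := rayFrom_spec hcat x ξ
  obtain ⟨-, hy, ey⟩ := rayFrom_spec hcat y ξ
  exact Quotient.exact (ex.trans ey.symm)

/-! ### Busemann functions -/

theorem busemann_antitone {X : Type*} [MetricSpace X] [ProperSpace X] (hcat : CAT0Space X)
    (x z : X) (ξ : Boundary X) :
    Antitone fun t : {t : ℝ // 0 ≤ t} =>
      dist z (rayFrom x ξ t.1) - dist x (rayFrom x ξ t.1) := by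
  rintro ⟨s, hs⟩ ⟨t, ht⟩ hst
  have hst' : s ≤ t := hst
  obtain ⟨-, h, -⟩ := rayFrom_spec hcat x ξ
  have h1 := h s t hs ht
  rw [abs_of_nonpos (by linarith)] at h1
  have h2 := dist_triangle z (rayFrom x ξ s) (rayFrom x ξ t)
  simp only [dist_rayFrom hcat x ξ hs, dist_rayFrom hcat x ξ ht]
  linarith

theorem busemann_bddBelow {X : Type*} [MetricSpace X] (x z : X) (ξ : Boundary X) :
    BddBelow (Set.range fun t : {t : ℝ // 0 ≤ t} =>
      dist z (rayFrom x ξ t.1) - dist x (rayFrom x ξ t.1)) := by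
  refine ⟨-dist x z, ?_⟩
  rintro _ ⟨t, rfl⟩
  have := dist_triangle x z (rayFrom x ξ t.1)
  simp only
  linarith

theorem busemann_le {X : Type*} [MetricSpace X] [ProperSpace X] (hcat : CAT0Space X)
    (x z : X) (ξ : Boundary X) {t : ℝ} (ht : 0 ≤ t) :
    busemann x z ξ ≤ dist z (rayFrom x ξ t) - t := by
  have := ciInf_le (busemann_bddBelow x z ξ) ⟨t, ht⟩
  simp only [dist_rayFrom hcat x ξ ht] at this
  exact this

theorem tendsto_busemann {X : Type*} [MetricSpace X] [ProperSpace X] (hcat : CAT0Space X)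
    (x z : X) (ξ : Boundary X) :
    Tendsto (fun t : ℝ => dist z (rayFrom x ξ t) - t) atTop (𝓝 (busemann x z ξ)) := by
  have h := tendsto_atTop_ciInf (busemann_antitone hcat x z ξ) (busemann_bddBelow x z ξ)
  have h' : Tendsto (fun t : ℝ => dist z (rayFrom x ξ t) - dist x (rayFrom x ξ t)) atTop
      (𝓝 (busemann x z ξ)) := tendsto_comp_val_Ici_atTop (a := (0 : ℝ)).1 h
  refine h'.congr' ?_
  filter_upwards [eventually_ge_atTop 0] with t ht
  rw [dist_rayFrom hcat x ξ ht]

/-- The quadrilateral inequality for `z`, `w` and the points at time `T` on the two rays, to first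
order in `T`. -/
theorem busemann_add_le {X : Type*} [MetricSpace X] [ProperSpace X] (hcat : CAT0Space X)
    (x y z w : X) (ξ : Boundary X) :
    busemann x z ξ + busemann y w ξ ≤ busemann y z ξ + busemann x w ξ := by
  obtain ⟨C, hC⟩ := rayFrom_asymptotic hcat x y ξ
  have a1 := tendsto_busemann hcat x z ξ
  have a2 := tendsto_busemann hcat y w ξ
  have a3 := tendsto_busemann hcat y z ξ
  have a4 := tendsto_busemann hcat x w ξ
  have hr := ((((a3.pow 2).add (a4.pow 2)).add
    (tendsto_const_nhds (x := dist z w ^ 2 + C ^ 2))).sub ((a1.pow 2).add (a2.pow 2))).mul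
    ((tendsto_inv_atTop_zero (𝕜 := ℝ)).const_mul (1 / 2))
  rw [mul_zero, mul_zero] at hr
  have hl := (a1.add a2).sub (a3.add a4)
  have key := le_of_tendsto_of_tendsto hl hr ?_
  · linarith
  · filter_upwards [eventually_gt_atTop 0] with T hT
    have q' := quadrilateral hcat z w (rayFrom x ξ T) (rayFrom y ξ T)
    have hc : dist (rayFrom x ξ T) (rayFrom y ξ T) ^ 2 ≤ C ^ 2 := by
      have := hC T hT.le
      gcongr
    rw [dist_comm w z, dist_comm (rayFrom y ξ T) z, dist_comm (rayFrom y ξ T) (rayFrom x ξ T)]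
      at q'
    rw [mul_comm (1 / 2 : ℝ), ← mul_assoc, mul_one_div, le_div_iff₀ two_pos, ← div_eq_mul_inv,
      le_div_iff₀ hT]
    nlinarith

theorem busemann_self {X : Type*} [MetricSpace X] (x : X) (ξ : Boundary X) :
    busemann x x ξ = 0 := by
  have : Nonempty {t : ℝ // 0 ≤ t} := ⟨⟨0, le_rfl⟩⟩
  simp [busemann]

theorem busemann_cocycle {X : Type*} [MetricSpace X] [ProperSpace X] (hcat : CAT0Space X)
    (x y z : X) (ξ : Boundary X) :
    busemann y x ξ + busemann x z ξ = busemann y z ξ := by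
  have h1 := busemann_add_le hcat x y z x ξ
  have h2 := busemann_add_le hcat x y x z ξ
  rw [busemann_self x ξ] at h1 h2
  linarith

/-! ### The Gromov product through Busemann functions -/

theorem neg_half_busemann_le_gromov {X : Type*} [MetricSpace X] [ProperSpace X]
    (hcat : CAT0Space X) (x z : X) (ξ η : Boundary X) :
    ((-(busemann x z ξ + busemann x z η) / 2 : ℝ) : EReal) ≤ gromov x ξ η := by
  have h := ((tendsto_busemann hcat x z ξ).add (tendsto_busemann hcat x z η)).neg.div_const 2
  refine le_of_tendsto ((continuous_coe_real_ereal.tendsto _).comp h) ?_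
  filter_upwards [eventually_ge_atTop 0] with t ht
  refine le_trans ?_ (le_iSup₂ (f := fun (t : ℝ) (_ : 0 ≤ t) =>
    ((t - dist (rayFrom x ξ t) (rayFrom x η t) / 2 : ℝ) : EReal)) t ht)
  refine EReal.coe_le_coe_iff.2 ?_
  have := dist_triangle_left (rayFrom x ξ t) (rayFrom x η t) z
  linarith

theorem exists_le_neg_half_busemann {X : Type*} [MetricSpace X] [ProperSpace X]
    (hcat : CAT0Space X) (x : X) (ξ η : Boundary X) {t : ℝ} (ht : 0 ≤ t) :
    ∃ z, t - dist (rayFrom x ξ t) (rayFrom x η t) / 2 ≤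
      -(busemann x z ξ + busemann x z η) / 2 := by
  obtain ⟨m, h1, h2⟩ := exists_midpoint hcat.1 (rayFrom x ξ t) (rayFrom x η t)
  refine ⟨m, ?_⟩
  have b1 := busemann_le hcat x m ξ ht
  have b2 := busemann_le hcat x m η ht
  rw [dist_comm m, h1] at b1
  linarith

theorem gromov_le {X : Type*} [MetricSpace X] [ProperSpace X] (hcat : CAT0Space X)
    (x y : X) (ξ η : Boundary X) :
    gromov x ξ η ≤ (((busemann y x ξ + busemann y x η) / 2 : ℝ) : EReal) + gromov y ξ η := by
  refine iSup₂_le fun t ht => ?_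
  obtain ⟨z, hz⟩ := exists_le_neg_half_busemann hcat x ξ η ht
  refine le_trans ?_ (add_le_add_right (neg_half_busemann_le_gromov hcat y z ξ η) _)
  rw [← EReal.coe_add]
  refine EReal.coe_le_coe_iff.2 ?_
  have c1 := busemann_cocycle hcat x y z ξ
  have c2 := busemann_cocycle hcat x y z η
  linarith

/-- For all `x, y ∈ X` and `ξ, η ∈ ∂X`:
`(ξ|η)_x = ½(B(y,x,ξ) + B(y,x,η)) + (ξ|η)_y`,
as an identity in `(-∞, ∞]` (both sides are `⊤` exactly when one Gromov product is). -/
theorem statement1 (X : Type*) [MetricSpace X] [ProperSpace X] [ConnectedSpace X]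
    (hcat : CAT0Space X) (hgc : GeodesicallyComplete X)
    (x y : X) (ξ η : Boundary X) :
    gromov x ξ η = (((busemann y x ξ + busemann y x η) / 2 : ℝ) : EReal) + gromov y ξ η := by
  refine le_antisymm (gromov_le hcat x y ξ η) ?_
  -- The reverse inequality is `gromov_le` with `x` and `y` exchanged, as `B(x,y,·) = -B(y,x,·)`.
  refine (add_le_add_right (gromov_le hcat y x ξ η) _).trans ?_
  have c1 := busemann_cocycle hcat x y y ξ
  have c2 := busemann_cocycle hcat x y y η
  rw [busemann_self] at c1 c2
  rw [← add_assoc, ← EReal.coe_add,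
    show (busemann y x ξ + busemann y x η) / 2 + (busemann x y ξ + busemann x y η) / 2 = 0 by
      linarith, EReal.coe_zero, zero_add]

end Paper
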